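/- **Setting.** Let $L$ be a finite set of input actions with complementary outputs $\overline L$, let $Act = L\cup\overline L\cup\{\tau\}$, and let $\mathcal C$ be a finite set of process constants. FNM has guarded terms $s ::= \mathbf 0 \mid \mu.t \mid \underline a.s \mid s+s$ ($\mu\in Act$, $a\in L$), sequential terms $q ::= s \mid C$, restriction-free terms $t ::= q \mid t\,|\,t$ and general terms $p ::= t \mid (\nu a)p$; each constant $C$ has a defining equation $C\doteq s$ with $s$ a closed guarded term. Open terms allow in addition a variable $x$ as a sequential term, and $p\{r/x\}$ is the substitution of the closed sequential term $r$ for $x$ in $p$. Each name $a$ has a restricted counterpart $a'$, and extended terms may use restricted names as well, but no extended term uses both $a$ and $a'$ free (free names are taken through the bodies of constants). Places are the closed sequential extended terms other than $\mathbf 0$; markings are finite multisets of places. The decomposition is $dec(\mathbf 0)=\theta$ (the empty marking), $dec(q)=\{q\}$ for every other sequential $q$, $dec(p\,|\,q)=dec(p)\oplus dec(q)$, $dec((\nu a)p)=dec(p)\{a'/a\}$. The derivable transitions between markings are generated by: $\{\mu.p\}\xrightarrow{\mu}dec(p)$; $\{p+q\}\xrightarrow{\sigma}m$ if $dec(p)\xrightarrow{\sigma}m$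 or $dec(q)\xrightarrow{\sigma}m$; $\{C\}\xrightarrow{\sigma}m$ if $C\doteq p$ and $dec(p)\xrightarrow{\sigma}m$; $\{\underline\gamma.p\}\xrightarrow{\gamma\diamond\sigma}m$ if $dec(p)\xrightarrow{\sigma}m$, where $\gamma\diamond\tau=\gamma$ and $\gamma\diamond\sigma=\gamma\sigma$ for $\sigma\ne\tau$; and $m_1\oplus m_2\xrightarrow{\sigma}m_1'\oplus m_2'$ if $m_i\xrightarrow{\sigma_i}m_i'$ for $i=1,2$, no name occurs free in $m_1\oplus m_2$ both as $a$ and as $a'$, and $Sync(\sigma_1,\sigma_2,\sigma)$, where $Sync$ consists of $Sync(\alpha,\overline\alpha,\tau)$ and, for $\sigma\neq\varepsilon$, $Sync(\gamma\sigma,\overline\gamma,\sigma)$ and $Sync(\overline\gamma,\gamma\sigma,\sigma)$. The transitions of the net are the derivable ones whose label contains no restricted action. A linking is a finite multiset of pairs of places, with projections $\pi_1,\pi_2$. A structure-preserving bisimulation is a set $R$ of linkings such that for all $l\in R$ and $c\subseteq l$: for every net transition $\pi_1(c)\xrightarrow{\sigma}m_1$ there are a net transition $\pi_2(c)\xrightarrow{\sigma}m_2$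 and a linking $\overline c$ with $\pi_1(\overline c)=m_1$, $\pi_2(\overline c)=m_2$ and $(l\ominus c)\oplus\overline c\in R$, and symmetrically. Write $p\sim_{sp}q$ if some structure-preserving bisimulation contains a linking $l$ with $\pi_1(l)=dec(p)$ and $\pi_2(l)=dec(q)$. **Statement.** For every process constant $C$: - (stuck) if $C\doteq\mathbf 0$, then $C\sim_{sp}\mathbf 0+\mathbf 0$; - (unfolding) if $C\doteq p$, where $p$ is a closed guarded term and $p\neq\mathbf 0$, then $C\sim_{sp}p$; - (folding) if $C\doteq p\{C/x\}$, where $p\neq\mathbf 0$ is an open guarded term with no variable other than $x$ (for instance, any such term in which $x$ occurs), and $q$ is a closed sequential term with $q\sim_{sp}p\{q/x\}$, then $C\sim_{sp}q$. -/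

import Mathlib

/-- Actions of FNM: the invisible action `τ`, inputs `a ∈ L` and outputs `ā`
(the type `α` plays the role of the finite set `L` of names). -/
inductive Act (α : Type*) where
  | tau : Act α
  | inp : α → Act α
  | out : α → Act α

/-- Raw (open) FNM terms over the names `α` and the constants `κ`: `0`, the variable
`x`, action prefixing `μ.t`, strong prefixing `a̲.s`, choice `s + s`, constants `C`,
parallel composition `t | t` and restriction `(νa)p`. The syntactic categories are
the predicates below. -/
inductive FNM (α κ : Type*) where
  | nil : FNM α κ
  | var : FNM α κ
  | pref : Act α → FNM α κ → FNM α κ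
  | spref : α → FNM α κ → FNM α κ
  | sum : FNM α κ → FNM α κ → FNM α κ
  | const : κ → FNM α κ
  | par : FNM α κ → FNM α κ → FNM α κ
  | res : α → FNM α κ → FNM α κ

namespace FNM

variable {α κ : Type*}

mutual
  /-- (Open) guarded terms `s ::= 0 | μ.t | a̲.s | s + s`. -/
  def Grd : FNM α κ → Prop
    | .nil => True
    | .var => False
    | .pref _ t => RF t
    | .spref _ s => Grd s
    | .sum s1 s2 => Grd s1 ∧ Grd s2
    | .const _ => False
    | .par _ _ => False
    | .res _ _ => False
  /-- (Open) restriction-free terms `t ::= q | t | t`, with `q ::= s | C | x`. -/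
  def RF : FNM α κ → Prop
    | .nil => True
    | .var => True
    | .pref _ t => RF t
    | .spref _ s => Grd s
    | .sum s1 s2 => Grd s1 ∧ Grd s2
    | .const _ => True
    | .par t1 t2 => RF t1 ∧ RF t2
    | .res _ _ => False
end

/-- (Open) sequential terms `q ::= s | C | x`. -/
def SeqTerm (t : FNM α κ) : Prop :=
  Grd t ∨ (∃ c, t = FNM.const c) ∨ t = FNM.var

/-- Closed terms: the variable does not occur. -/
def VarFree : FNM α κ → Prop
  | .nil => True
  | .var => False
  | .pref _ t => VarFree t
  | .spref _ s => VarFree s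
  | .sum s1 s2 => VarFree s1 ∧ VarFree s2
  | .const _ => True
  | .par t1 t2 => VarFree t1 ∧ VarFree t2
  | .res _ p => VarFree p

/-- Substitution: `subst r p` is `p{r/x}`. Bodies of constants are closed, so constants
are not affected. -/
def subst (r : FNM α κ) : FNM α κ → FNM α κ
  | .nil => .nil
  | .var => r
  | .pref mu t => .pref mu (subst r t)
  | .spref a s => .spref a (subst r s)
  | .sum s1 s2 => .sum (subst r s1) (subst r s2)
  | .const c => .const c
  | .par t1 t2 => .par (subst r t1) (subst r t2)
  | .res a p => .res a (subst r p)

/-- The action `μ` is `a` or `ā`. -/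
def _root_.Act.uses (a : α) : Act α → Prop
  | .tau => False
  | .inp b => b = a
  | .out b => b = a

/-- The name `a` occurs free in a term, where `env c` is the body of the constant `c`. -/
inductive FreeIn (env : κ → FNM α κ) (a : α) : FNM α κ → Prop where
  | pref_act {mu : Act α} {t : FNM α κ} : mu.uses a → FreeIn env a (.pref mu t)
  | pref_cont {mu : Act α} {t : FNM α κ} : FreeIn env a t → FreeIn env a (.pref mu t)
  | spref_act {s : FNM α κ} : FreeIn env a (.spref a s)
  | spref_cont {b : α} {s : FNM α κ} : FreeIn env a s → FreeIn env a (.spref b s)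
  | sum_l {s1 s2 : FNM α κ} : FreeIn env a s1 → FreeIn env a (.sum s1 s2)
  | sum_r {s1 s2 : FNM α κ} : FreeIn env a s2 → FreeIn env a (.sum s1 s2)
  | par_l {t1 t2 : FNM α κ} : FreeIn env a t1 → FreeIn env a (.par t1 t2)
  | par_r {t1 t2 : FNM α κ} : FreeIn env a t2 → FreeIn env a (.par t1 t2)
  | res {b : α} {p : FNM α κ} : a ≠ b → FreeIn env a p → FreeIn env a (.res b p)
  | const {c : κ} : FreeIn env a (env c) → FreeIn env a (.const c)

/-- The set `fn(t)` of free names of a term over unrestricted names. -/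
def fn (env : κ → FNM α κ) (t : FNM α κ) : Set α := {a | FreeIn env a t}

end FNM

/-- Extended sequential terms. By admissibility each name occurs in an extended term
either always as `a` or always as its restricted counterpart `a'`; so such a term is
an ordinary term `term` together with the set `restr` of those of its free names `a`
that are written `a'`. The actual places of the net are singled out by `IsPlace`. -/
@[ext] structure Place (α κ : Type*) where
  term : FNM α κ
  restr : Set α

/-- Extended visible actions; the Boolean is `true` for the restricted actions
`a'` and their complements, `false` for `a` and `ā`. -/
inductive XAct (α : Type*) where
  | inp : α → Bool → XAct α
  | out : α → Bool → XAct α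

/-- Labels: `τ` is the empty list, any other label is a nonempty sequence of extended
actions. With this encoding `γ ⋄ σ` is `γ :: σ` in all cases. -/
abbrev Lbl (α : Type*) := List (XAct α)

/-- The action is not a restricted one. -/
def XAct.unres {α : Type*} : XAct α → Prop
  | .inp _ r => r = false
  | .out _ r => r = false

open Classical in
/-- The extended input action that `a` stands for, when the names in `ρ` are restricted. -/
noncomputable def xinp {α : Type*} (ρ : Set α) (a : α) : XAct α :=
  .inp a (decide (a ∈ ρ))

open Classical in
/-- The extended output action that `ā` stands for, when the names in `ρ` are
restricted. -/
noncomputable def xout {α : Type*} (ρ : Set α) (a : α) : XAct α :=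
  .out a (decide (a ∈ ρ))

/-- The label of the prefix `μ`, when the names in `ρ` are restricted. -/
noncomputable def actL {α : Type*} (ρ : Set α) : Act α → Lbl α
  | .tau => []
  | .inp a => [xinp ρ a]
  | .out a => [xout ρ a]

/-- The synchronization relation `Sync(σ₁, σ₂, σ)`, also on restricted actions. -/
inductive Sync {α : Type*} : Lbl α → Lbl α → Lbl α → Prop where
  | inout (a : α) (r : Bool) : Sync [XAct.inp a r] [XAct.out a r] []
  | outin (a : α) (r : Bool) : Sync [XAct.out a r] [XAct.inp a r] []
  | seqL (a : α) (r : Bool) (σ : Lbl α) :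
      σ ≠ [] → Sync (XAct.inp a r :: σ) [XAct.out a r] σ
  | seqR (a : α) (r : Bool) (σ : Lbl α) :
      σ ≠ [] → Sync [XAct.out a r] (XAct.inp a r :: σ) σ

namespace FNM

variable {α κ : Type*}

/-- The elements of `S_FNM`: closed sequential extended terms other than `0`. -/
def IsPlace (env : κ → FNM α κ) (s : Place α κ) : Prop :=
  SeqTerm s.term ∧ VarFree s.term ∧ s.term ≠ FNM.nil ∧ s.restr ⊆ fn env s.term

/-- The substitution `{a'/a | a ∈ ρ}` on extended sequential terms. -/
def restrict (env : κ → FNM α κ) (ρ : Set α) (s : Place α κ) : Place α κ :=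
  ⟨s.term, s.restr ∪ (ρ ∩ fn env s.term)⟩

/-- The decomposition function: `dec(0) = θ`, `dec(p|q) = dec(p) ⊕ dec(q)`,
`dec((νa)p) = dec(p){a'/a}`, and `dec(q) = {q}` for the other sequential terms. -/
def dec (env : κ → FNM α κ) : FNM α κ → Multiset (Place α κ)
  | .nil => 0
  | .par t1 t2 => dec env t1 + dec env t2
  | .res a p => (dec env p).map (restrict env {a})
  | t => {⟨t, ∅⟩}

/-- The decomposition of the extended term `t{a'/a | a ∈ ρ}`. -/
def decX (env : κ → FNM α κ) (ρ : Set α) (t : FNM α κ) : Multiset (Place α κ) :=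
  (dec env t).map (restrict env ρ)

/-- A marking is admissible if for no name `a` both `a` and `a'` occur free in it. -/
def Adm (env : κ → FNM α κ) (m : Multiset (Place α κ)) : Prop :=
  ∀ a : α, ¬ ((∃ s ∈ m, a ∈ fn env s.term ∧ a ∉ s.restr) ∧
              (∃ s ∈ m, a ∈ fn env s.term ∧ a ∈ s.restr))

/-- The transitions derivable by the rules (pref), (sum₁), (sum₂), (cons), (s-pref)
and (s-com). -/
inductive Tr (env : κ → FNM α κ) :
    Multiset (Place α κ) → Lbl α → Multiset (Place α κ) → Prop where
  | pref (ρ : Set α) (mu : Act α) (t : FNM α κ) :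
      Tr env {⟨FNM.pref mu t, ρ⟩} (actL ρ mu) (decX env ρ t)
  | sum1 (ρ : Set α) (s1 s2 : FNM α κ) (σ : Lbl α) (m : Multiset (Place α κ)) :
      Tr env (decX env ρ s1) σ m → Tr env {⟨FNM.sum s1 s2, ρ⟩} σ m
  | sum2 (ρ : Set α) (s1 s2 : FNM α κ) (σ : Lbl α) (m : Multiset (Place α κ)) :
      Tr env (decX env ρ s2) σ m → Tr env {⟨FNM.sum s1 s2, ρ⟩} σ m
  | cons (ρ : Set α) (c : κ) (σ : Lbl α) (m : Multiset (Place α κ)) :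
      Tr env (decX env ρ (env c)) σ m → Tr env {⟨FNM.const c, ρ⟩} σ m
  | spref (ρ : Set α) (a : α) (s : FNM α κ) (σ : Lbl α) (m : Multiset (Place α κ)) :
      Tr env (decX env ρ s) σ m → Tr env {⟨FNM.spref a s, ρ⟩} (xinp ρ a :: σ) m
  | scom (m1 m2 m1' m2' : Multiset (Place α κ)) (σ1 σ2 σ : Lbl α) :
      Tr env m1 σ1 m1' → Tr env m2 σ2 m2' → Adm env (m1 + m2) → Sync σ1 σ2 σ →
      Tr env (m1 + m2) σ (m1' + m2')

/-- The transitions of the net `N_FNM`: the derivable ones whose label contains no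
restricted action. -/
def NetTr (env : κ → FNM α κ) (m : Multiset (Place α κ)) (σ : Lbl α)
    (m' : Multiset (Place α κ)) : Prop :=
  Tr env m σ m' ∧ ∀ x ∈ σ, x.unres

/-- First projection of a linking. -/
def pi1 (l : Multiset (Place α κ × Place α κ)) : Multiset (Place α κ) :=
  l.map Prod.fst

/-- Second projection of a linking. -/
def pi2 (l : Multiset (Place α κ × Place α κ)) : Multiset (Place α κ) :=
  l.map Prod.snd

/-- A linking: a finite multiset of pairs of places. -/
def IsLinking (env : κ → FNM α κ) (l : Multiset (Place α κ × Place α κ)) : Prop :=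
  ∀ x ∈ l, IsPlace env x.1 ∧ IsPlace env x.2

open Classical in
/-- Structure-preserving bisimulations on the net `N_FNM`. -/
def IsSPB (env : κ → FNM α κ) (R : Set (Multiset (Place α κ × Place α κ))) : Prop :=
  ∀ l ∈ R, IsLinking env l ∧ ∀ c ≤ l,
    (∀ σ m1, NetTr env (pi1 c) σ m1 →
      ∃ m2 cb, NetTr env (pi2 c) σ m2 ∧
        pi1 cb = m1 ∧ pi2 cb = m2 ∧ l - c + cb ∈ R) ∧
    (∀ σ m2, NetTr env (pi2 c) σ m2 →
      ∃ m1 cb, NetTr env (pi1 c) σ m1 ∧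
        pi1 cb = m1 ∧ pi2 cb = m2 ∧ l - c + cb ∈ R)

/-- `p ~sp q`: some structure-preserving bisimulation contains a linking that projects
on `dec(p)` and `dec(q)`. -/
def SPEq (env : κ → FNM α κ) (p q : FNM α κ) : Prop :=
  ∃ R, IsSPB env R ∧ ∃ l ∈ R, pi1 l = dec env p ∧ pi2 l = dec env q

end FNM

/-!
A transition of a marking is assembled from transitions of its single places, and nothing
reachable from an unrestricted place involves restricted names, so on such places all
markings are admissible and `~sp` reduces to a bisimulation between single places in which
the markings reached are related place by place. For this equivalence a guarded equation
`x = p` has at most one solution: the transitions of `p{r/x}` do not depend on `r` and lead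
to markings of terms `u{r/x}`, so the instances of guarded terms by two solutions form a
bisimulation up to bisimilarity. The unfolding law makes `C` a solution of `x = p` when
`C ≐ p{C/x}`, which gives the folding law.
-/

namespace FNM

section MultisetRel

variable {A B C : Type*} {r : A → B → Prop}

theorem rel_comp {p : B → C → Prop} {s : Multiset A} {t : Multiset B} {u : Multiset C}
    (hst : Multiset.Rel r s t) (htu : Multiset.Rel p t u) :
    Multiset.Rel (Relation.Comp r p) s u := by
  induction hst generalizing u with
  | zero => simpa using htu
  | cons hab _ ih =>
    obtain ⟨c, u', hbc, htu', rfl⟩ := Multiset.rel_cons_left.mp htu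
    exact .cons ⟨_, hab, hbc⟩ (ih htu')

theorem rel_map_fst_map_snd {l : Multiset (A × B)} (h : ∀ x ∈ l, r x.1 x.2) :
    Multiset.Rel r (l.map Prod.fst) (l.map Prod.snd) :=
  Multiset.rel_map.mpr (Multiset.rel_refl_of_refl_on h)

theorem exists_map_fst_map_snd_of_rel {s : Multiset A} {t : Multiset B}
    (h : Multiset.Rel r s t) :
    ∃ l : Multiset (A × B), l.map Prod.fst = s ∧ l.map Prod.snd = t ∧ ∀ x ∈ l, r x.1 x.2 := by
  induction h with
  | zero => exact ⟨0, by simp⟩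
  | @cons a b _ _ hab _ ih =>
    obtain ⟨l, rfl, rfl, hl⟩ := ih
    exact ⟨(a, b) ::ₘ l, by simp, by simp, Multiset.forall_mem_cons.mpr ⟨hab, hl⟩⟩

end MultisetRel

variable {α κ : Type*} {env : κ → FNM α κ}

/-! ### Transitions of single places -/

theorem Tr.ne_zero {m m' : Multiset (Place α κ)} {σ : Lbl α} (h : Tr env m σ m') : m ≠ 0 := by
  induction h with
  | scom _ _ _ _ _ _ _ _ _ _ _ ih _ => simp [ih]
  | _ => simp

theorem not_tr_zero {m : Multiset (Place α κ)} {σ : Lbl α} : ¬ Tr env 0 σ m :=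
  fun h => h.ne_zero rfl

theorem Tr.add_ne_singleton {m₁ m₂ m₁' m₂' : Multiset (Place α κ)} {σ₁ σ₂ : Lbl α}
    (h₁ : Tr env m₁ σ₁ m₁') (h₂ : Tr env m₂ σ₂ m₂') (x : Place α κ) : m₁ + m₂ ≠ {x} := by
  intro h
  have hcard := congrArg Multiset.card h
  have := Multiset.card_pos.mpr h₁.ne_zero
  have := Multiset.card_pos.mpr h₂.ne_zero
  simp only [Multiset.card_add, Multiset.card_singleton] at hcard
  omega

section Inversion

variable {ρ : Set α} {σ : Lbl α} {m : Multiset (Place α κ)}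

theorem tr_pref_iff {μ : Act α} {t : FNM α κ} :
    Tr env {⟨.pref μ t, ρ⟩} σ m ↔ σ = actL ρ μ ∧ m = decX env ρ t := by
  refine ⟨fun h => ?_, fun ⟨hσ, hm⟩ => hσ ▸ hm ▸ .pref ρ μ t⟩
  generalize hM : ({⟨.pref μ t, ρ⟩} : Multiset (Place α κ)) = M at h
  cases h with
  | scom _ _ _ _ _ _ _ h₁ h₂ => exact (h₁.add_ne_singleton h₂ _ hM.symm).elim
  | _ => simp_all

theorem tr_sum_iff {s₁ s₂ : FNM α κ} :
    Tr env {⟨.sum s₁ s₂, ρ⟩} σ m ↔ Tr env (decX env ρ s₁) σ m ∨ Tr env (decX env ρ s₂) σ m := by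
  refine ⟨fun h => ?_, fun h => h.elim (.sum1 ρ s₁ s₂ σ m) (.sum2 ρ s₁ s₂ σ m)⟩
  generalize hM : ({⟨.sum s₁ s₂, ρ⟩} : Multiset (Place α κ)) = M at h
  cases h with
  | scom _ _ _ _ _ _ _ h₁ h₂ => exact (h₁.add_ne_singleton h₂ _ hM.symm).elim
  | _ => simp_all

theorem tr_const_iff {c : κ} :
    Tr env {⟨.const c, ρ⟩} σ m ↔ Tr env (decX env ρ (env c)) σ m := by
  refine ⟨fun h => ?_, .cons ρ c σ m⟩
  generalize hM : ({⟨.const c, ρ⟩} : Multiset (Place α κ)) = M at h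
  cases h with
  | scom _ _ _ _ _ _ _ h₁ h₂ => exact (h₁.add_ne_singleton h₂ _ hM.symm).elim
  | _ => simp_all

theorem tr_spref_iff {a : α} {s : FNM α κ} :
    Tr env {⟨.spref a s, ρ⟩} σ m ↔ ∃ σ', σ = xinp ρ a :: σ' ∧ Tr env (decX env ρ s) σ' m := by
  refine ⟨fun h => ?_, fun ⟨σ', hσ, h⟩ => hσ ▸ .spref ρ a s σ' m h⟩
  generalize hM : ({⟨.spref a s, ρ⟩} : Multiset (Place α κ)) = M at h
  cases h with
  | scom _ _ _ _ _ _ _ h₁ h₂ => exact (h₁.add_ne_singleton h₂ _ hM.symm).elim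
  | _ => simp_all

end Inversion

/-! ### Unrestricted places -/

/-- The place of a term none of whose names is restricted. -/
def plain (t : FNM α κ) : Place α κ := ⟨t, ∅⟩

/-- Places of the net without restricted names. -/
def IsUnres (env : κ → FNM α κ) (x : Place α κ) : Prop :=
  IsPlace env x ∧ x.restr = ∅

/-- Every constant is defined by a closed guarded term. -/
def GuardedEnv (env : κ → FNM α κ) : Prop :=
  ∀ c, Grd (env c) ∧ VarFree (env c)

theorem isUnres_plain_iff {t : FNM α κ} :
    IsUnres env (plain t) ↔ SeqTerm t ∧ VarFree t ∧ t ≠ .nil := by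
  simp [IsUnres, IsPlace, plain]

theorem isUnres_plain_const (c : κ) : IsUnres env (plain (.const c)) :=
  isUnres_plain_iff.mpr ⟨.inr (.inl ⟨c, rfl⟩), trivial, by simp⟩

theorem Grd.rf {t : FNM α κ} (h : Grd t) : RF t := by
  cases t <;> simp_all [Grd, RF]

theorem SeqTerm.rf {t : FNM α κ} (h : SeqTerm t) : RF t := by
  rcases h with h | ⟨c, rfl⟩ | rfl
  · exact h.rf
  · trivial
  · trivial

theorem SeqTerm.dec_eq {t : FNM α κ} (h : SeqTerm t) (h0 : t ≠ .nil) :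
    dec env t = {plain t} := by
  cases t <;> simp_all [dec, plain, SeqTerm, Grd]

theorem decX_empty (t : FNM α κ) : decX env ∅ t = dec env t := by
  have restrict_empty : restrict env ∅ = id := by
    funext x
    simp [restrict]
  rw [decX, restrict_empty, Multiset.map_id]

theorem isUnres_of_mem_dec {t : FNM α κ} (ht : RF t) (hv : VarFree t) {x : Place α κ}
    (hx : x ∈ dec env t) : IsUnres env x := by
  induction t with
  | par t₁ t₂ ih₁ ih₂ =>
    exact (Multiset.mem_add.mp hx).elim (ih₁ ht.1 hv.1) (ih₂ ht.2 hv.2)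
  | _ => simp_all [dec, IsUnres, IsPlace, SeqTerm, RF, Grd, VarFree]

/-- Markings without restricted names. -/
def UnresMarking (env : κ → FNM α κ) (m : Multiset (Place α κ)) : Prop :=
  ∀ x ∈ m, IsUnres env x

theorem UnresMarking.adm {m : Multiset (Place α κ)} (h : UnresMarking env m) : Adm env m := by
  rintro a ⟨-, x, hx, -, ha⟩
  simp [(h x hx).2] at ha

theorem UnresMarking.of_add {m₁ m₂ : Multiset (Place α κ)} (h : UnresMarking env (m₁ + m₂)) :
    UnresMarking env m₁ ∧ UnresMarking env m₂ :=
  ⟨fun x hx => h x (Multiset.mem_add.mpr (.inl hx)),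
    fun x hx => h x (Multiset.mem_add.mpr (.inr hx))⟩

section Subterms

variable {ρ : Set α}

theorem unresMarking_singleton {x : Place α κ} : UnresMarking env {x} ↔ IsUnres env x := by
  simp [UnresMarking]

theorem unresMarking_decX {t : FNM α κ} (hρ : ρ = ∅) (ht : RF t) (hv : VarFree t) :
    UnresMarking env (decX env ρ t) := by
  rw [hρ, decX_empty]
  exact fun _ => isUnres_of_mem_dec ht hv

theorem UnresMarking.of_pref {μ : Act α} {t : FNM α κ}
    (h : UnresMarking env {⟨.pref μ t, ρ⟩}) : UnresMarking env (decX env ρ t) := by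
  obtain ⟨⟨ht, hv, -⟩, hρ⟩ := unresMarking_singleton.mp h
  exact unresMarking_decX hρ (by simpa [SeqTerm, Grd] using ht) hv

theorem UnresMarking.of_sum {s₁ s₂ : FNM α κ} (h : UnresMarking env {⟨.sum s₁ s₂, ρ⟩}) :
    UnresMarking env (decX env ρ s₁) ∧ UnresMarking env (decX env ρ s₂) := by
  obtain ⟨⟨ht, hv, -⟩, hρ⟩ := unresMarking_singleton.mp h
  have hs : Grd s₁ ∧ Grd s₂ := by simpa [SeqTerm, Grd] using ht
  exact ⟨unresMarking_decX hρ hs.1.rf hv.1, unresMarking_decX hρ hs.2.rf hv.2⟩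

theorem UnresMarking.of_spref {a : α} {s : FNM α κ}
    (h : UnresMarking env {⟨.spref a s, ρ⟩}) : UnresMarking env (decX env ρ s) := by
  obtain ⟨⟨ht, hv, -⟩, hρ⟩ := unresMarking_singleton.mp h
  have hs : Grd s := by simpa [SeqTerm, Grd] using ht
  exact unresMarking_decX hρ hs.rf hv

theorem UnresMarking.of_const (henv : GuardedEnv env) {c : κ}
    (h : UnresMarking env {⟨.const c, ρ⟩}) : UnresMarking env (decX env ρ (env c)) :=
  unresMarking_decX (unresMarking_singleton.mp h).2 (henv c).1.rf (henv c).2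

end Subterms

theorem Tr.unresMarking (henv : GuardedEnv env) {m m' : Multiset (Place α κ)} {σ : Lbl α}
    (h : Tr env m σ m') (hm : UnresMarking env m) : UnresMarking env m' := by
  induction h with
  | pref => exact hm.of_pref
  | sum1 _ _ _ _ _ _ ih => exact ih hm.of_sum.1
  | sum2 _ _ _ _ _ _ ih => exact ih hm.of_sum.2
  | cons _ _ _ _ _ ih => exact ih (hm.of_const henv)
  | spref _ _ _ _ _ _ ih => exact ih hm.of_spref
  | scom _ _ _ _ _ _ _ _ _ _ _ ih₁ ih₂ =>
    have h₁ := ih₁ hm.of_add.1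
    have h₂ := ih₂ hm.of_add.2
    exact fun x hx => (Multiset.mem_add.mp hx).elim (h₁ x) (h₂ x)

theorem unres_of_mem_actL_empty {μ : Act α} {γ : XAct α} (hγ : γ ∈ actL ∅ μ) : γ.unres := by
  cases μ <;> simp_all [actL, xinp, xout, XAct.unres]

theorem subset_append_of_sync {σ₁ σ₂ σ : Lbl α} (h : Sync σ₁ σ₂ σ) : σ ⊆ σ₁ ++ σ₂ := by
  cases h <;> simp

theorem Tr.netTr (henv : GuardedEnv env) {m m' : Multiset (Place α κ)} {σ : Lbl α}
    (h : Tr env m σ m') (hm : UnresMarking env m) : NetTr env m σ m' := by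
  refine ⟨h, ?_⟩
  induction h with
  | pref =>
    obtain rfl := (unresMarking_singleton.mp hm).2
    exact fun _ => unres_of_mem_actL_empty
  | sum1 _ _ _ _ _ _ ih => exact ih hm.of_sum.1
  | sum2 _ _ _ _ _ _ ih => exact ih hm.of_sum.2
  | cons _ _ _ _ _ ih => exact ih (hm.of_const henv)
  | spref _ _ _ _ _ _ ih =>
    obtain rfl := (unresMarking_singleton.mp hm).2
    exact List.forall_mem_cons.mpr ⟨by simp [xinp, XAct.unres], ih hm.of_spref⟩
  | scom _ _ _ _ _ _ _ _ _ _ hsync ih₁ ih₂ =>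
    intro γ hγ
    rcases List.mem_append.mp (subset_append_of_sync hsync hγ) with hγ | hγ
    · exact ih₁ hm.of_add.1 γ hγ
    · exact ih₂ hm.of_add.2 γ hγ

/-! ### Place bisimilarity -/

/-- Transitions of the left one of two places related by `B` are matched by the right one,
and the markings reached are related place by place by `B'`. -/
def Progresses (env : κ → FNM α κ) (B B' : Place α κ → Place α κ → Prop) : Prop :=
  ∀ ⦃x y⦄, B x y → ∀ ⦃σ m⦄, Tr env {x} σ m → ∃ n, Tr env {y} σ n ∧ Multiset.Rel B' m n

section Progresses

variable {B B' D D' : Place α κ → Place α κ → Prop}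

theorem Progresses.mono (h : Progresses env B B') (hle : ∀ x y, B' x y → D x y) :
    Progresses env B D := fun _ _ hxy _ _ hm =>
  (h hxy hm).imp fun _ hn => ⟨hn.1, hn.2.mono fun x _ y _ => hle x y⟩

theorem Progresses.comp (hB : Progresses env B B') (hD : Progresses env D D') :
    Progresses env (Relation.Comp B D) (Relation.Comp B' D') := by
  rintro x z ⟨y, hxy, hyz⟩ σ m hm
  obtain ⟨n, hn, hmn⟩ := hB hxy hm
  obtain ⟨k, hk, hnk⟩ := hD hyz hn
  exact ⟨k, hk, rel_comp hmn hnk⟩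

theorem unresMarking_of_rel {m n : Multiset (Place α κ)} (hB : ∀ x y, B x y → IsUnres env y)
    (h : Multiset.Rel B m n) : UnresMarking env n := by
  intro y hy
  obtain ⟨x, -, hxy⟩ := Multiset.exists_mem_of_rel_of_mem (Multiset.rel_flip.mpr h) hy
  exact hB x y hxy

/-- The synchronizations need no clause of their own in the definition of a progression:
related markings split along the premises of (s-com). -/
theorem Progresses.exists_tr_of_rel (h : Progresses env B B')
    (hB : ∀ x y, B x y → IsUnres env y) {m m' n : Multiset (Place α κ)} {σ : Lbl α}
    (hm : Tr env m σ m') (hmn : Multiset.Rel B m n) :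
    ∃ n', Tr env n σ n' ∧ Multiset.Rel B' m' n' := by
  have of_singleton {x : Place α κ} {σ m' n} (hx : Tr env {x} σ m')
      (hxn : Multiset.Rel B {x} n) : ∃ n', Tr env n σ n' ∧ Multiset.Rel B' m' n' := by
    obtain ⟨y, n₀, hxy, hn₀, rfl⟩ := Multiset.rel_cons_left.mp hxn
    obtain rfl := Multiset.rel_zero_left.mp hn₀
    exact h hxy hx
  induction hm generalizing n with
  | pref ρ μ t => exact of_singleton (.pref ρ μ t) hmn
  | sum1 ρ s₁ s₂ σ m hm => exact of_singleton (.sum1 ρ s₁ s₂ σ m hm) hmn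
  | sum2 ρ s₁ s₂ σ m hm => exact of_singleton (.sum2 ρ s₁ s₂ σ m hm) hmn
  | cons ρ c σ m hm => exact of_singleton (.cons ρ c σ m hm) hmn
  | spref ρ a s σ m hm => exact of_singleton (.spref ρ a s σ m hm) hmn
  | scom m₁ m₂ m₁' m₂' σ₁ σ₂ σ _ _ _ hsync ih₁ ih₂ =>
    have hadm := (unresMarking_of_rel hB hmn).adm
    obtain ⟨n₁, n₂, h₁, h₂, rfl⟩ := Multiset.rel_add_left.mp hmn
    obtain ⟨n₁', hn₁, hr₁⟩ := ih₁ h₁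
    obtain ⟨n₂', hn₂, hr₂⟩ := ih₂ h₂
    exact ⟨n₁' + n₂', .scom _ _ _ _ _ _ _ hn₁ hn₂ hadm hsync, hr₁.add hr₂⟩

end Progresses

/-- Bisimulations on the unrestricted places of the net. -/
structure IsPlaceBisim (env : κ → FNM α κ) (B : Place α κ → Place α κ → Prop) : Prop where
  isUnres : ∀ x y, B x y → IsUnres env x ∧ IsUnres env y
  progresses : Progresses env B B
  progresses_flip : Progresses env (flip B) (flip B)

/-- Place bisimilarity, the equivalence on single unrestricted places that `~sp` reduces
to. -/
def PlaceBisimilar (env : κ → FNM α κ) (x y : Place α κ) : Prop :=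
  ∃ B, IsPlaceBisim env B ∧ B x y

theorem IsPlaceBisim.flip {B : Place α κ → Place α κ → Prop} (h : IsPlaceBisim env B) :
    IsPlaceBisim env (flip B) :=
  ⟨fun x y hxy => (h.isUnres y x hxy).symm, h.progresses_flip, h.progresses⟩

section Bisimilarity

variable {x y z : Place α κ}

theorem PlaceBisimilar.isUnres (h : PlaceBisimilar env x y) : IsUnres env x ∧ IsUnres env y :=
  let ⟨_, hB, hxy⟩ := h
  hB.isUnres x y hxy

theorem PlaceBisimilar.symm (h : PlaceBisimilar env x y) : PlaceBisimilar env y x :=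
  let ⟨_, hB, hxy⟩ := h
  ⟨_, hB.flip, hxy⟩

theorem flip_placeBisimilar : flip (PlaceBisimilar env) = PlaceBisimilar env :=
  funext₂ fun _ _ => propext ⟨.symm, .symm⟩

theorem progresses_placeBisimilar :
    Progresses env (PlaceBisimilar env) (PlaceBisimilar env) := fun _ _ ⟨B, hB, hxy⟩ =>
  hB.progresses.mono (fun _ _ h => ⟨B, hB, h⟩) hxy

theorem PlaceBisimilar.trans (hxy : PlaceBisimilar env x y) (hyz : PlaceBisimilar env y z) :
    PlaceBisimilar env x z := by
  have hcomp := progresses_placeBisimilar.comp (progresses_placeBisimilar (env := env))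
  refine ⟨_, ⟨?_, hcomp, ?_⟩, y, hxy, hyz⟩
  · rintro x z ⟨y, hxy, hyz⟩
    exact ⟨hxy.isUnres.1, hyz.isUnres.2⟩
  · rwa [Relation.flip_comp, flip_placeBisimilar]

theorem placeBisimilar_of_tr_iff (henv : GuardedEnv env) (hx : IsUnres env x)
    (hy : IsUnres env y) (h : ∀ σ m, Tr env {x} σ m ↔ Tr env {y} σ m) :
    PlaceBisimilar env x y := by
  let B : Place α κ → Place α κ → Prop := fun x y =>
    IsUnres env x ∧ IsUnres env y ∧ ∀ σ m, Tr env {x} σ m ↔ Tr env {y} σ m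
  have flip_B : flip B = B := funext₂ fun x y => propext
    ⟨fun ⟨hy, hx, h⟩ => ⟨hx, hy, fun σ m => (h σ m).symm⟩,
      fun ⟨hx, hy, h⟩ => ⟨hy, hx, fun σ m => (h σ m).symm⟩⟩
  have hB : Progresses env B B := by
    rintro x y ⟨hx, -, h⟩ σ m hm
    have hunres := hm.unresMarking henv (unresMarking_singleton.mpr hx)
    refine ⟨m, (h σ m).mp hm, Multiset.rel_refl_of_refl_on fun z hz => ?_⟩
    exact ⟨hunres z hz, hunres z hz, fun _ _ => Iff.rfl⟩
  exact ⟨B, ⟨fun x y h => ⟨h.1, h.2.1⟩, hB, by rwa [flip_B]⟩, hx, hy, h⟩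

theorem PlaceBisimilar.refl (henv : GuardedEnv env) (hx : IsUnres env x) :
    PlaceBisimilar env x x :=
  placeBisimilar_of_tr_iff henv hx hx fun _ _ => Iff.rfl

end Bisimilarity

/-- The closure of a relation on places under place bisimilarity on both sides. -/
def UpToBisim (env : κ → FNM α κ) (B : Place α κ → Place α κ → Prop) :
    Place α κ → Place α κ → Prop :=
  Relation.Comp (PlaceBisimilar env) (Relation.Comp B (PlaceBisimilar env))

section UpTo

variable {B : Place α κ → Place α κ → Prop}

theorem flip_upToBisim : flip (UpToBisim env B) = UpToBisim env (flip B) := by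
  simp only [UpToBisim, Relation.flip_comp, flip_placeBisimilar, Relation.comp_assoc]

theorem Progresses.upToBisim (h : Progresses env B (UpToBisim env B)) :
    Progresses env (UpToBisim env B) (UpToBisim env B) :=
  (progresses_placeBisimilar.comp (h.comp progresses_placeBisimilar)).mono
    fun _ _ ⟨_, h₁, _, ⟨_, h₂, _, hB, h₃⟩, h₄⟩ => ⟨_, h₁.trans h₂, _, hB, h₃.trans h₄⟩

theorem upToBisim_of_rel (henv : GuardedEnv env)
    (hB : ∀ x y, B x y → IsUnres env x ∧ IsUnres env y) {x y : Place α κ} (hxy : B x y) :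
    UpToBisim env B x y :=
  ⟨x, .refl henv (hB x y hxy).1, y, hxy, .refl henv (hB x y hxy).2⟩

theorem placeBisimilar_of_progresses_upToBisim (henv : GuardedEnv env)
    (hB : ∀ x y, B x y → IsUnres env x ∧ IsUnres env y)
    (h : Progresses env B (UpToBisim env B))
    (h_flip : Progresses env (flip B) (UpToBisim env (flip B)))
    {x y : Place α κ} (hxy : B x y) : PlaceBisimilar env x y := by
  refine ⟨UpToBisim env B, ⟨?_, h.upToBisim, ?_⟩, upToBisim_of_rel henv hB hxy⟩
  · rintro x y ⟨_, hx, _, -, hy⟩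
    exact ⟨hx.isUnres.1, hy.isUnres.2⟩
  · rw [flip_upToBisim]
    exact h_flip.upToBisim

end UpTo

/-! ### Place bisimilarity is structure-preserving bisimilarity -/

theorem IsPlaceBisim.isSPB {B : Place α κ → Place α κ → Prop} (hB : IsPlaceBisim env B) :
    IsSPB env {l | ∀ x ∈ l, B x.1 x.2} := by
  classical
  intro l hl
  have mem_sub_add {c cb : Multiset (Place α κ × Place α κ)} (hcb : ∀ x ∈ cb, B x.1 x.2) :
      ∀ x ∈ l - c + cb, B x.1 x.2 := fun x hx =>
    (Multiset.mem_add.mp hx).elim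
      (fun hx => hl x (Multiset.mem_of_le (Multiset.sub_le_self _ _) hx)) (hcb x)
  refine ⟨fun x hx => (hB.isUnres _ _ (hl x hx)).imp And.left And.left, fun c hc => ?_⟩
  have hc_rel : Multiset.Rel B (pi1 c) (pi2 c) :=
    rel_map_fst_map_snd fun x hx => hl x (Multiset.mem_of_le hc hx)
  refine ⟨fun σ m ⟨hm, hσ⟩ => ?_, fun σ n ⟨hn, hσ⟩ => ?_⟩
  · obtain ⟨n, hn, hmn⟩ :=
      hB.progresses.exists_tr_of_rel (fun x y h => (hB.isUnres x y h).2) hm hc_rel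
    obtain ⟨cb, h₁, h₂, hcb⟩ := exists_map_fst_map_snd_of_rel hmn
    exact ⟨n, cb, ⟨hn, hσ⟩, h₁, h₂, mem_sub_add hcb⟩
  · obtain ⟨m, hm, hnm⟩ := hB.progresses_flip.exists_tr_of_rel
      (fun x y h => (hB.isUnres y x h).1) hn (Multiset.rel_flip.mpr hc_rel)
    obtain ⟨cb, h₁, h₂, hcb⟩ := exists_map_fst_map_snd_of_rel (Multiset.rel_flip.mp hnm)
    exact ⟨m, cb, ⟨hm, hσ⟩, h₁, h₂, mem_sub_add hcb⟩

/-- The pairs of unrestricted places linked by some member of a set of linkings. -/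
def Linked (R : Set (Multiset (Place α κ × Place α κ))) (x y : Place α κ) : Prop :=
  x.restr = ∅ ∧ y.restr = ∅ ∧ ∃ l ∈ R, (x, y) ∈ l

theorem rel_linked {R : Set (Multiset (Place α κ × Place α κ))}
    {l l' : Multiset (Place α κ × Place α κ)} (hl : l' + l ∈ R)
    (h₁ : UnresMarking env (pi1 l)) (h₂ : UnresMarking env (pi2 l)) :
    Multiset.Rel (Linked R) (pi1 l) (pi2 l) :=
  rel_map_fst_map_snd fun x hx =>
    ⟨(h₁ x.1 (Multiset.mem_map_of_mem _ hx)).2, (h₂ x.2 (Multiset.mem_map_of_mem _ hx)).2,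
      _, hl, Multiset.mem_add.mpr (.inr hx)⟩

theorem IsSPB.isPlaceBisim (henv : GuardedEnv env)
    {R : Set (Multiset (Place α κ × Place α κ))} (hR : IsSPB env R) :
    IsPlaceBisim env (Linked R) := by
  classical
  have isUnres : ∀ x y, Linked R x y → IsUnres env x ∧ IsUnres env y :=
    fun x y ⟨hx, hy, l, hl, hxy⟩ =>
      ⟨⟨((hR l hl).1 _ hxy).1, hx⟩, ⟨((hR l hl).1 _ hxy).2, hy⟩⟩
  refine ⟨isUnres, fun x y hxy σ m hm => ?_, fun y x hxy σ n hn => ?_⟩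
  all_goals
    obtain ⟨hx, hy⟩ := (isUnres x y hxy).imp unresMarking_singleton.mpr unresMarking_singleton.mpr
    obtain ⟨-, -, l, hl, hxy⟩ := hxy
    obtain ⟨h, h_flip⟩ := (hR l hl).2 {(x, y)} (Multiset.singleton_le.mpr hxy)
  · obtain ⟨n, cb, hn, rfl, rfl, hcb⟩ := h σ m (hm.netTr henv hx)
    exact ⟨_, hn.1, rel_linked hcb (hm.unresMarking henv hx) (hn.1.unresMarking henv hy)⟩
  · obtain ⟨m, cb, hm, rfl, rfl, hcb⟩ := h_flip σ n (hn.netTr henv hy)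
    exact ⟨_, hm.1, Multiset.rel_flip.mpr
      (rel_linked hcb (hm.1.unresMarking henv hx) (hn.unresMarking henv hy))⟩

theorem IsUnres.dec_eq {t : FNM α κ} (ht : IsUnres env (plain t)) : dec env t = {plain t} :=
  let ⟨hs, _, h0⟩ := isUnres_plain_iff.mp ht
  hs.dec_eq h0

theorem PlaceBisimilar.speq {s t : FNM α κ}
    (h : PlaceBisimilar env (plain s) (plain t)) : SPEq env s t := by
  rw [SPEq, h.isUnres.1.dec_eq, h.isUnres.2.dec_eq]
  obtain ⟨B, hB, hst⟩ := h
  exact ⟨_, hB.isSPB, {(plain s, plain t)}, by simpa using hst, rfl, rfl⟩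

theorem SPEq.placeBisimilar (henv : GuardedEnv env) {s t : FNM α κ}
    (hs : IsUnres env (plain s)) (ht : IsUnres env (plain t)) (h : SPEq env s t) :
    PlaceBisimilar env (plain s) (plain t) := by
  rw [SPEq, hs.dec_eq, ht.dec_eq] at h
  obtain ⟨R, hR, l, hl, h₁, h₂⟩ := h
  obtain ⟨⟨x, y⟩, rfl, rfl⟩ := Multiset.map_eq_singleton.mp h₁
  obtain rfl : y = plain t := Multiset.singleton_inj.mp h₂
  exact ⟨Linked R, hR.isPlaceBisim henv, rfl, rfl, _, hl, Multiset.mem_singleton_self _⟩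

theorem SPEq.card_dec_eq {p q : FNM α κ} (h : SPEq env p q) :
    (dec env p).card = (dec env q).card := by
  obtain ⟨_, -, l, -, h₁, h₂⟩ := h
  rw [← h₁, ← h₂, pi1, pi2, Multiset.card_map, Multiset.card_map]

/-! ### Guarded equations -/

theorem subst_of_varFree (r : FNM α κ) {t : FNM α κ} (h : VarFree t) : subst r t = t := by
  induction t <;> simp_all [subst, VarFree]

theorem varFree_subst {r : FNM α κ} (hr : VarFree r) (t : FNM α κ) : VarFree (subst r t) := by
  induction t <;> simp_all [subst, VarFree]

theorem grd_subst_and_rf_subst {r : FNM α κ} (hr : RF r) (t : FNM α κ) :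
    (Grd t → Grd (subst r t)) ∧ (RF t → RF (subst r t)) := by
  induction t <;> simp_all [subst, Grd, RF]

theorem SeqTerm.subst {r t : FNM α κ} (hr : SeqTerm r) (ht : SeqTerm t) :
    SeqTerm (subst r t) := by
  rcases ht with ht | ⟨c, rfl⟩ | rfl
  · exact .inl ((grd_subst_and_rf_subst hr.rf t).1 ht)
  · exact .inr (.inl ⟨c, rfl⟩)
  · exact hr

theorem IsUnres.subst {r t : FNM α κ} (hr : IsUnres env (plain r)) (ht : SeqTerm t)
    (h0 : t ≠ .nil) : IsUnres env (plain (subst r t)) := by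
  obtain ⟨hrs, hrv, hr0⟩ := isUnres_plain_iff.mp hr
  refine isUnres_plain_iff.mpr ⟨hrs.subst ht, varFree_subst hrv t, ?_⟩
  cases t <;> simp_all [FNM.subst]

theorem Tr.exists_subst_of_grd {r t : FNM α κ} {σ : Lbl α} {m : Multiset (Place α κ)}
    (ht : Grd t) (h : Tr env (dec env (subst r t)) σ m) :
    ∃ u, RF u ∧ m = dec env (subst r u) ∧
      ∀ r', Tr env (dec env (subst r' t)) σ (dec env (subst r' u)) := by
  induction t generalizing σ m with
  | nil => exact (not_tr_zero h).elim
  | pref μ t _ =>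
    simp only [subst, dec, tr_pref_iff, decX_empty] at h ⊢
    exact ⟨t, ht, h.2, fun _ => ⟨h.1, rfl⟩⟩
  | spref a s ih =>
    simp only [subst, dec, tr_spref_iff, decX_empty] at h ⊢
    obtain ⟨σ', hσ, h⟩ := h
    obtain ⟨u, hu, hm, hall⟩ := ih ht h
    exact ⟨u, hu, hm, fun r' => ⟨σ', hσ, hall r'⟩⟩
  | sum s₁ s₂ ih₁ ih₂ =>
    simp only [subst, dec, tr_sum_iff, decX_empty] at h ⊢
    rcases h with h | h
    · obtain ⟨u, hu, hm, hall⟩ := ih₁ ht.1 h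
      exact ⟨u, hu, hm, fun r' => .inl (hall r')⟩
    · obtain ⟨u, hu, hm, hall⟩ := ih₂ ht.2 h
      exact ⟨u, hu, hm, fun r' => .inr (hall r')⟩
  | _ => exact ht.elim

theorem Tr.exists_subst (henv : GuardedEnv env) {r t : FNM α κ} {σ : Lbl α}
    {m : Multiset (Place α κ)} (ht : SeqTerm t) (hvar : t ≠ .var)
    (h : Tr env (dec env (subst r t)) σ m) :
    ∃ u, RF u ∧ m = dec env (subst r u) ∧
      ∀ r', Tr env (dec env (subst r' t)) σ (dec env (subst r' u)) := by
  rcases ht with ht | ⟨c, rfl⟩ | rfl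
  · exact h.exists_subst_of_grd ht
  · have subst_body (r : FNM α κ) : subst r (env c) = env c := subst_of_varFree r (henv c).2
    simp only [subst, dec, tr_const_iff, decX_empty] at h ⊢
    rw [← subst_body r] at h
    obtain ⟨u, hu, hm, hall⟩ := h.exists_subst_of_grd (henv c).1
    exact ⟨u, hu, hm, fun r' => by simpa only [subst_body] using hall r'⟩
  · exact (hvar rfl).elim

/-- The pairs of instances, by `r` and by `r'`, of a sequential term other than `0`. The
variable itself is left out: its instances are bisimilar to those of the right-hand side of
the equation that `r` and `r'` solve. -/
def Instances (r r' : FNM α κ) (x y : Place α κ) : Prop :=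
  ∃ t, SeqTerm t ∧ t ≠ .nil ∧ t ≠ .var ∧ x = plain (subst r t) ∧ y = plain (subst r' t)

theorem flip_instances (r r' : FNM α κ) : flip (Instances r r') = Instances r' r :=
  funext₂ fun _ _ => propext
    ⟨fun ⟨t, ht, h0, hvar, hy, hx⟩ => ⟨t, ht, h0, hvar, hx, hy⟩,
      fun ⟨t, ht, h0, hvar, hx, hy⟩ => ⟨t, ht, h0, hvar, hy, hx⟩⟩

section Solutions

variable {r r' : FNM α κ}

theorem Instances.isUnres (hr : IsUnres env (plain r)) (hr' : IsUnres env (plain r'))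
    {x y : Place α κ} (h : Instances r r' x y) : IsUnres env x ∧ IsUnres env y := by
  obtain ⟨t, ht, h0, -, rfl, rfl⟩ := h
  exact ⟨hr.subst ht h0, hr'.subst ht h0⟩

variable {p : FNM α κ}

theorem instances_of_grd (hp : Grd p) (hrp : IsUnres env (plain (subst r p))) :
    Instances r r' (plain (subst r p)) (plain (subst r' p)) := by
  refine ⟨p, .inl hp, ?_, ?_, rfl, rfl⟩
  · rintro rfl
    exact (isUnres_plain_iff.mp hrp).2.2 rfl
  · rintro rfl
    exact hp

theorem rel_dec_subst (henv : GuardedEnv env) (hp : Grd p)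
    (hr : PlaceBisimilar env (plain r) (plain (subst r p)))
    (hr' : PlaceBisimilar env (plain r') (plain (subst r' p))) {u : FNM α κ} (hu : RF u) :
    Multiset.Rel (UpToBisim env (Instances r r')) (dec env (subst r u))
      (dec env (subst r' u)) := by
  have hru := hr.isUnres.1
  have hru' := hr'.isUnres.1
  have of_seqTerm {t : FNM α κ} (ht : SeqTerm t) (h0 : t ≠ .nil) (hvar : t ≠ .var) :
      Multiset.Rel (UpToBisim env (Instances r r')) (dec env (subst r t))
        (dec env (subst r' t)) := by
    rw [(hru.subst ht h0).dec_eq, (hru'.subst ht h0).dec_eq]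
    exact .cons (upToBisim_of_rel henv (fun _ _ => Instances.isUnres hru hru')
      ⟨t, ht, h0, hvar, rfl, rfl⟩) .zero
  induction u with
  | nil => exact .zero
  | var =>
    rw [subst, subst, hru.dec_eq, hru'.dec_eq]
    exact .cons ⟨_, hr, _, instances_of_grd hp hr.isUnres.2, hr'.symm⟩ .zero
  | par t₁ t₂ ih₁ ih₂ => exact (ih₁ hu.1).add (ih₂ hu.2)
  | res a t => exact hu.elim
  | const c => exact of_seqTerm (.inr (.inl ⟨c, rfl⟩)) (by simp) (by simp)
  | _ => exact of_seqTerm (.inl hu) (by simp) (by simp)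

theorem progresses_instances (henv : GuardedEnv env) (hp : Grd p)
    (hr : PlaceBisimilar env (plain r) (plain (subst r p)))
    (hr' : PlaceBisimilar env (plain r') (plain (subst r' p))) :
    Progresses env (Instances r r') (UpToBisim env (Instances r r')) := by
  rintro x y ⟨t, ht, h0, hvar, rfl, rfl⟩ σ m hm
  rw [← (hr.isUnres.1.subst ht h0).dec_eq] at hm
  obtain ⟨u, hu, rfl, hall⟩ := hm.exists_subst henv ht hvar
  rw [← (hr'.isUnres.1.subst ht h0).dec_eq]
  exact ⟨_, hall r', rel_dec_subst henv hp hr hr' hu⟩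

theorem PlaceBisimilar.of_guarded_equation (henv : GuardedEnv env) (hp : Grd p)
    (hr : PlaceBisimilar env (plain r) (plain (subst r p)))
    (hr' : PlaceBisimilar env (plain r') (plain (subst r' p))) :
    PlaceBisimilar env (plain r) (plain r') := by
  have hrp : PlaceBisimilar env (plain (subst r p)) (plain (subst r' p)) :=
    placeBisimilar_of_progresses_upToBisim henv
      (fun _ _ => Instances.isUnres hr.isUnres.1 hr'.isUnres.1)
      (progresses_instances henv hp hr hr')
      (by simpa only [flip_instances] using progresses_instances henv hp hr' hr)
      (instances_of_grd hp hr.isUnres.2)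
  exact hr.trans (hrp.trans hr'.symm)

end Solutions

/-! ### Laws of constants -/

theorem placeBisimilar_const_body (henv : GuardedEnv env) {c : κ} (h0 : env c ≠ .nil) :
    PlaceBisimilar env (plain (.const c)) (plain (env c)) := by
  have hbody : IsUnres env (plain (env c)) :=
    isUnres_plain_iff.mpr ⟨.inl (henv c).1, (henv c).2, h0⟩
  refine placeBisimilar_of_tr_iff henv (isUnres_plain_const c) hbody fun σ m => ?_
  rw [plain, tr_const_iff, decX_empty, hbody.dec_eq]

theorem placeBisimilar_const_sum_nil_nil (henv : GuardedEnv env) {c : κ} (hc : env c = .nil) :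
    PlaceBisimilar env (plain (.const c)) (plain (.sum .nil .nil)) := by
  have hsum : IsUnres env (plain (.sum .nil .nil)) :=
    isUnres_plain_iff.mpr ⟨.inl ⟨trivial, trivial⟩, ⟨trivial, trivial⟩, by simp⟩
  refine placeBisimilar_of_tr_iff henv (isUnres_plain_const c) hsum fun σ m => ?_
  simp only [plain, tr_const_iff, tr_sum_iff, hc, or_self]

theorem ne_nil_of_speq_subst {p q : FNM α κ} (hp : Grd p) (hp0 : p ≠ .nil)
    (h : SPEq env q (subst q p)) : q ≠ .nil := by
  rintro rfl
  have hcard := h.card_dec_eq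
  have hsubst : SeqTerm (subst .nil p) := SeqTerm.subst (.inl trivial) (.inl hp)
  have hsubst0 : subst .nil p ≠ .nil := by
    cases p <;> simp_all [FNM.subst, Grd]
  simp [hsubst.dec_eq hsubst0, dec] at hcard

theorem speq_of_const_body_eq_subst (henv : GuardedEnv env) {c : κ} {p q : FNM α κ}
    (hp : Grd p) (hp0 : p ≠ .nil) (hc : env c = subst (.const c) p) (hq : SeqTerm q)
    (hqv : VarFree q) (h : SPEq env q (subst q p)) : SPEq env (.const c) q := by
  have hC := isUnres_plain_const (env := env) c
  have hQ : IsUnres env (plain q) :=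
    isUnres_plain_iff.mpr ⟨hq, hqv, ne_nil_of_speq_subst hp hp0 h⟩
  have hcp := hC.subst (.inl hp) hp0
  have hconst : PlaceBisimilar env (plain (.const c)) (plain (subst (.const c) p)) :=
    hc ▸ placeBisimilar_const_body henv (hc ▸ (isUnres_plain_iff.mp hcp).2.2)
  have hsol : PlaceBisimilar env (plain q) (plain (subst q p)) :=
    h.placeBisimilar henv hQ (hQ.subst (.inl hp) hp0)
  exact (PlaceBisimilar.of_guarded_equation henv hp hconst hsol).speq

end FNM

open FNM in
theorem speq_constant_laws_general {α κ : Type*} (env : κ → FNM α κ)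
    (henv : ∀ c, Grd (env c) ∧ VarFree (env c)) (c : κ) :
    (env c = FNM.nil → SPEq env (FNM.const c) (FNM.sum FNM.nil FNM.nil)) ∧
    (env c ≠ FNM.nil → SPEq env (FNM.const c) (env c)) ∧
    (∀ p q : FNM α κ, Grd p → p ≠ FNM.nil → env c = subst (FNM.const c) p →
      SeqTerm q → VarFree q → SPEq env q (subst q p) →
      SPEq env (FNM.const c) q) :=
  ⟨fun hc => (placeBisimilar_const_sum_nil_nil henv hc).speq,
    fun h0 => (placeBisimilar_const_body henv h0).speq,
    fun _ _ hp hp0 hc hq hqv h => speq_of_const_body_eq_subst henv hp hp0 hc hq hqv h⟩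

open FNM in
/-- Laws of process constants up to structure-preserving bisimilarity, where `env c` is
the body of the constant `c`. In (folding), `p ≠ 0` holds in particular whenever the
variable `x` occurs in `p`. -/
theorem speq_constant_laws {α κ : Type*} [Finite α] [Finite κ]
    (env : κ → FNM α κ) (henv : ∀ c, Grd (env c) ∧ VarFree (env c))
    (c : κ) :
    -- (stuck)
    (env c = FNM.nil → SPEq env (FNM.const c) (FNM.sum FNM.nil FNM.nil)) ∧
    -- (unfolding)
    (∀ p : FNM α κ, Grd p → VarFree p → env c = p → p ≠ FNM.nil →
      SPEq env (FNM.const c) p) ∧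
    -- (folding)
    (∀ p q : FNM α κ, Grd p → p ≠ FNM.nil → env c = subst (FNM.const c) p →
      SeqTerm q → VarFree q → SPEq env q (subst q p) →
      SPEq env (FNM.const c) q) :=
  let ⟨stuck, unfolding, folding⟩ := speq_constant_laws_general env henv c
  ⟨stuck, fun _ _ _ hc h0 => hc ▸ unfolding (hc ▸ h0), folding⟩
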